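/- Let n ≥ 3 be an odd integer and let Ω ⊂ ℝⁿ be an elliptical domain. Then for any two distinct points x₀, x₁ ∈ Ω, the function s ↦ (Rχ_Ω)(ω⋆(x₀,x₁), s) is n times differentiable at s⋆(x₀,x₁) and its n-th derivative there vanishes: (∂_s^n Rχ_Ω)(ω⋆(x₀,x₁), s⋆(x₀,x₁)) = 0; equivalently, the kernel k_Ω(x₀,x₁) vanishes for all distinct x₀,x₁ ∈ Ω, so the operator K_Ω vanishes identically on functions supported in Ω. -/

import Mathlib

/-!
Slices of an ellipsoid by parallel hyperplanes are homothetic. Write `Q x = ∑ (x i / a i) ^ 2`,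
fix `ω ≠ 0`, let `H = ∑ (a i * ω i) ^ 2` (the squared support function of the ellipsoid) and let
`v i = a i ^ 2 * ω i / H`. Then `⟪ω, v⟫ = 1`, `Q v = 1 / H`, and `v` is `Q`-orthogonal to the
hyperplane `ω⊥`. Hence for `s ^ 2 < H` the slice at height `s` is the translate by `s • v` of the
central slice dilated by `√(1 - s ^ 2 / H)` (`slice_eq`), so its Hausdorff measure of dimension
`n - 1 = 2 k` is `(1 - s ^ 2 / H) ^ k` times that of the central slice (`radonChi_ellipsoid`). This
is a polynomial in `s` of degree at most `2 k < n`, whose `n`-th derivative vanishes.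

The height `s⋆` equals `⟪ω⋆, m⟫` with `m` the midpoint of `x₀` and `x₁`; since `Q m < 1`, the
Cauchy-Schwarz inequality gives `s⋆ ^ 2 < H` (`sStar_sq_lt`), so `s⋆` is interior to the range of
heights on which the polynomial formula holds.
-/

open MeasureTheory Filter Metric Set
open scoped Topology ENNReal RealInnerProductSpace NNReal

noncomputable section

abbrev En (n : ℕ) := EuclideanSpace ℝ (Fin n)

/-- The operator `𝒟 = (2t)⁻¹ ∂_t` (differentiation with respect to `t²`). -/
def Dop (g : ℝ → ℝ) : ℝ → ℝ := fun t => (2 * t)⁻¹ * deriv g t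

/-- Total surface area `ω_{n-1} = 2 π^{n/2} / Γ(n/2)` of the unit sphere in `ℝⁿ`. -/
def sphereArea (n : ℕ) : ℝ := 2 * Real.pi ^ ((n : ℝ) / 2) / Real.Gamma ((n : ℝ) / 2)

/-- Spherical mean `(Mf)(x,r)`. -/
def sphMean (n : ℕ) (f : En n → ℝ) (x : En n) (r : ℝ) : ℝ :=
  (sphereArea n)⁻¹ * ∫ σ in sphere (0 : En n) 1, f (x + r • σ) ∂ μH[(n : ℝ) - 1]

/-- Radon transform of the characteristic function of `Ω`. -/
def radonChi (n : ℕ) (Ω : Set (En n)) (ω : En n) (s : ℝ) : ℝ :=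
  (μH[(n : ℝ) - 1] (Ω ∩ {x : En n | ⟪ω, x⟫ = s})).toReal

def omegaStar (n : ℕ) (x₀ x₁ : En n) : En n := ‖x₁ - x₀‖⁻¹ • (x₁ - x₀)

def sStar (n : ℕ) (x₀ x₁ : En n) : ℝ := (‖x₁‖ ^ 2 - ‖x₀‖ ^ 2) / (2 * ‖x₁ - x₀‖)

/-- Principal-value Hilbert transform of `φ` at `s`. -/
def pvHilbert (φ : ℝ → ℝ) (s : ℝ) : ℝ :=
  Real.pi⁻¹ * limUnder (𝓝[>] (0 : ℝ)) fun ε => ∫ t in {t : ℝ | ε < |t - s|}, φ t / (s - t)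

/-- The kernel `k_Ω` in even dimensions. -/
def kernEven (n : ℕ) (Ω : Set (En n)) (x₀ x₁ : En n) : ℝ :=
  ((-1 : ℝ) ^ ((n - 2) / 2) / (2 ^ (n + 1) * Real.pi ^ (n - 1))) *
    iteratedDeriv n (pvHilbert (radonChi n Ω (omegaStar n x₀ x₁))) (sStar n x₀ x₁) /
      ‖x₁ - x₀‖ ^ (n - 1)

/-- The kernel `k_Ω` in odd dimensions. -/
def kernOdd (n : ℕ) (Ω : Set (En n)) (x₀ x₁ : En n) : ℝ :=
  ((-1 : ℝ) ^ ((n - 1) / 2) / (2 ^ (n + 1) * Real.pi ^ (n - 1))) *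
    iteratedDeriv n (radonChi n Ω (omegaStar n x₀ x₁)) (sStar n x₀ x₁) /
      ‖x₁ - x₀‖ ^ (n - 1)

/-- The smoothing operator `K_Ω` with a given kernel. -/
def Kop (n : ℕ) (Ω : Set (En n)) (kern : En n → En n → ℝ) (f : En n → ℝ) (x₀ : En n) : ℝ :=
  ∫ x₁ in Ω, kern x₀ x₁ * f x₁

/-- Principal value of `∫₀^∞ g(r) dr` with singularity at `r = a`. -/
def pvRadial (g : ℝ → ℝ) (a : ℝ) : ℝ :=
  limUnder (𝓝[>] (0 : ℝ)) fun ε => ∫ r in {r : ℝ | 0 < r ∧ ε < |r - a|}, g r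

/-- Divergence of a vector field on `ℝⁿ`. -/
def divg (n : ℕ) (Φ : En n → En n) (z : En n) : ℝ :=
  ∑ i, fderiv ℝ Φ z (EuclideanSpace.single i 1) i

open scoped Pointwise

variable {n : ℕ} {a : Fin n → ℝ}

/-- The squared support function `∑ (a i * ω i) ^ 2` of the ellipsoid with semi-axes `a i`,
evaluated at the direction `ω`. -/
def supportSq (a : Fin n → ℝ) (ω : En n) : ℝ := ∑ i, (a i * ω i) ^ 2

/-- The direction along which the centres of the slices orthogonal to `ω` move, normalised so that
its inner product with `ω` is `1`. -/
def centreDir (a : Fin n → ℝ) (ω : En n) : En n :=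
  WithLp.toLp 2 fun i => a i ^ 2 * ω i / supportSq a ω

lemma inner_eq_sum (x y : En n) : ⟪x, y⟫ = ∑ i, x i * y i := by
  simp [PiLp.inner_apply, mul_comm]

lemma supportSq_pos (ha : ∀ i, 0 < a i) {ω : En n} (hω : ω ≠ 0) : 0 < supportSq a ω := by
  obtain ⟨i, hi⟩ : ∃ i, ω i ≠ 0 := by
    by_contra! h
    exact hω (by ext i; simpa using h i)
  refine Finset.sum_pos' (fun i _ => sq_nonneg _) ⟨i, Finset.mem_univ i, ?_⟩
  have := (ha i).ne'
  positivity

lemma inner_centreDir {ω : En n} (hH : 0 < supportSq a ω) : ⟪ω, centreDir a ω⟫ = 1 := by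
  rw [inner_eq_sum, ← div_self hH.ne']
  conv_rhs => rw [supportSq.eq_1 a ω, Finset.sum_div]
  rw [← supportSq.eq_1 a ω]
  exact Finset.sum_congr rfl fun i _ => by simp only [centreDir]; ring

/-- Pythagoras for the quadratic form `∑ (x i / a i) ^ 2`: `centreDir a ω` is orthogonal to the
hyperplane `ω⊥` with respect to it. -/
lemma quad_add (ha : ∀ i, 0 < a i) {ω : En n} (hH : 0 < supportSq a ω) (s r : ℝ) {y : En n}
    (hy : ⟪ω, y⟫ = 0) :
    ∑ i, ((s • centreDir a ω + r • y) i / a i) ^ 2 =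
      s ^ 2 / supportSq a ω + r ^ 2 * ∑ i, (y i / a i) ^ 2 := by
  rw [inner_eq_sum] at hy
  have key : ∀ i, ((s • centreDir a ω + r • y) i / a i) ^ 2 =
      s ^ 2 / supportSq a ω ^ 2 * (a i * ω i) ^ 2 + 2 * s * r / supportSq a ω * (ω i * y i) +
        r ^ 2 * (y i / a i) ^ 2 := fun i => by
    have := (ha i).ne'
    have := hH.ne'
    simp only [centreDir, PiLp.add_apply, PiLp.smul_apply, smul_eq_mul]
    field_simp
    ring
  simp_rw [key]
  rw [Finset.sum_add_distrib, Finset.sum_add_distrib, ← Finset.mul_sum, ← Finset.mul_sum,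
    ← Finset.mul_sum, hy, ← supportSq.eq_1 a ω]
  have := hH.ne'
  field_simp
  ring

lemma slice_eq (ha : ∀ i, 0 < a i) {ω : En n} (hH : 0 < supportSq a ω) {s : ℝ}
    (hs : s ^ 2 < supportSq a ω) :
    {x : En n | ∑ i, (x i / a i) ^ 2 < 1} ∩ {x | ⟪ω, x⟫ = s} =
      (fun x => s • centreDir a ω + x) '' (√(1 - s ^ 2 / supportSq a ω) •
        ({x : En n | ∑ i, (x i / a i) ^ 2 < 1} ∩ {x | ⟪ω, x⟫ = 0})) := by
  have ht : 0 < 1 - s ^ 2 / supportSq a ω := by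
    rw [sub_pos, div_lt_one hH]; exact hs
  set r := √(1 - s ^ 2 / supportSq a ω) with hr
  have hr0 : 0 < r := Real.sqrt_pos.2 ht
  have hr2 : r ^ 2 = 1 - s ^ 2 / supportSq a ω := Real.sq_sqrt ht.le
  ext x
  constructor
  · rintro ⟨hx, hxs⟩
    have hy : ⟪ω, r⁻¹ • (x - s • centreDir a ω)⟫ = 0 := by
      rw [inner_smul_right, inner_sub_right, inner_smul_right, inner_centreDir hH, hxs]
      simp
    have hxy : s • centreDir a ω + r • (r⁻¹ • (x - s • centreDir a ω)) = x := by
      rw [smul_inv_smul₀ hr0.ne']; abel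
    refine ⟨_, ⟨r⁻¹ • (x - s • centreDir a ω), ⟨?_, hy⟩, rfl⟩, hxy⟩
    have hq := quad_add ha hH s r hy
    rw [hxy] at hq
    simp only [mem_ofPred_eq] at hx
    rw [hq] at hx
    simp only [mem_ofPred_eq]
    by_contra! hge
    nlinarith [mul_le_mul_of_nonneg_left hge (sq_nonneg r)]
  · rintro ⟨_, ⟨y, ⟨hy1, hy⟩, rfl⟩, rfl⟩
    simp only [mem_ofPred_eq] at hy hy1
    constructor
    · simp only [mem_ofPred_eq]
      rw [quad_add ha hH s r hy]
      nlinarith [mul_lt_mul_of_pos_left hy1 (pow_pos hr0 2)]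
    · simp only [mem_ofPred_eq]
      rw [inner_add_right, inner_smul_right, inner_smul_right, inner_centreDir hH, hy]
      simp

/-- The polynomial profile of the Radon transform, from the scaling of Hausdorff measure under the
homothety of `slice_eq`. The value at `0` enters only as a constant, so it need not be computed, nor
the slice measures shown to be finite. -/
lemma radonChi_ellipsoid {k : ℕ} (hk : n = 2 * k + 1) (ha : ∀ i, 0 < a i) {ω : En n}
    (hH : 0 < supportSq a ω) {s : ℝ} (hs : s ^ 2 < supportSq a ω) :
    radonChi n {x : En n | ∑ i, (x i / a i) ^ 2 < 1} ω s =
      radonChi n {x : En n | ∑ i, (x i / a i) ^ 2 < 1} ω 0 * (1 - s ^ 2 / supportSq a ω) ^ k := by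
  have ht : 0 < 1 - s ^ 2 / supportSq a ω := by
    rw [sub_pos, div_lt_one hH]; exact hs
  have hd : (n : ℝ) - 1 = ((2 * k : ℕ) : ℝ) := by subst hk; push_cast; ring
  have hpow : ((‖√(1 - s ^ 2 / supportSq a ω)‖₊ ^ (2 * k) : ℝ≥0) : ℝ) =
      (1 - s ^ 2 / supportSq a ω) ^ k := by
    rw [NNReal.coe_pow, coe_nnnorm, pow_mul, Real.norm_eq_abs, sq_abs, Real.sq_sqrt ht.le]
  unfold radonChi
  rw [slice_eq ha hH hs, hd, (isometry_add_left (s • centreDir a ω)).hausdorffMeasure_image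
    (Or.inl (Nat.cast_nonneg _)),
    Measure.hausdorffMeasure_smul₀ (Nat.cast_nonneg _) (Real.sqrt_pos.2 ht).ne',
    NNReal.rpow_natCast, ENNReal.smul_def, smul_eq_mul, ENNReal.toReal_mul, ENNReal.coe_toReal,
    hpow, mul_comm]

lemma omegaStar_ne_zero {x₀ x₁ : En n} (h : x₀ ≠ x₁) : omegaStar n x₀ x₁ ≠ 0 := by
  have := sub_ne_zero.2 h.symm
  simp [omegaStar, this]

/-- The hyperplane at height `sStar` passes through the midpoint of `x₀` and `x₁`. -/
lemma sStar_eq {x₀ x₁ : En n} (h : x₀ ≠ x₁) :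
    sStar n x₀ x₁ = ⟪omegaStar n x₀ x₁, (2⁻¹ : ℝ) • (x₀ + x₁)⟫ := by
  have := norm_ne_zero_iff.2 (sub_ne_zero.2 h.symm)
  rw [omegaStar, inner_smul_left, inner_smul_right, inner_sub_left, inner_add_right,
    inner_add_right, real_inner_self_eq_norm_sq, real_inner_self_eq_norm_sq, real_inner_comm x₀ x₁,
    sStar]
  simp only [conj_trivial]
  field_simp
  ring

lemma sStar_sq_lt (ha : ∀ i, 0 < a i) {x₀ x₁ : En n} (h0 : ∑ i, (x₀ i / a i) ^ 2 < 1)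
    (h1 : ∑ i, (x₁ i / a i) ^ 2 < 1) (h : x₀ ≠ x₁) :
    sStar n x₀ x₁ ^ 2 < supportSq a (omegaStar n x₀ x₁) := by
  have hH := supportSq_pos ha (omegaStar_ne_zero h)
  have hmid : ∑ i, ((2⁻¹ : ℝ) * (x₀ i + x₁ i) / a i) ^ 2 < 1 := by
    calc ∑ i, ((2⁻¹ : ℝ) * (x₀ i + x₁ i) / a i) ^ 2
        ≤ ∑ i, (2⁻¹ * (x₀ i / a i) ^ 2 + 2⁻¹ * (x₁ i / a i) ^ 2) := by
          refine Finset.sum_le_sum fun i _ => ?_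
          rw [show 2⁻¹ * (x₀ i + x₁ i) / a i = 2⁻¹ * (x₀ i / a i + x₁ i / a i) by ring]
          nlinarith [sq_nonneg (x₀ i / a i - x₁ i / a i)]
      _ < 1 := by
          rw [Finset.sum_add_distrib, ← Finset.mul_sum, ← Finset.mul_sum]
          linarith
  have hcs := Finset.sum_mul_sq_le_sq_mul_sq Finset.univ
    (fun i => a i * omegaStar n x₀ x₁ i) (fun i => (2⁻¹ : ℝ) * (x₀ i + x₁ i) / a i)
  have heq : ∑ i, a i * omegaStar n x₀ x₁ i * ((2⁻¹ : ℝ) * (x₀ i + x₁ i) / a i) =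
      sStar n x₀ x₁ := by
    rw [sStar_eq h, inner_eq_sum]
    refine Finset.sum_congr rfl fun i _ => ?_
    have := (ha i).ne'
    simp only [PiLp.smul_apply, PiLp.add_apply, smul_eq_mul]
    field_simp
  rw [heq, ← supportSq.eq_1 a] at hcs
  nlinarith

lemma iteratedDeriv_polynomial (p : Polynomial ℝ) (m : ℕ) :
    iteratedDeriv m (fun s => p.eval s) = fun s => (Polynomial.derivative^[m] p).eval s := by
  induction m with
  | zero => simp
  | succ m ih =>
    rw [iteratedDeriv_succ, ih, Function.iterate_succ_apply']
    ext s
    simp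

open Polynomial in
/-- The polynomial `c * (1 - s ^ 2 / H) ^ k` in `s` has degree at most `2 * k`, so its derivative of
order `2 * k + 1` is zero. -/
lemma iteratedDeriv_profile (c H s : ℝ) (k : ℕ) :
    iteratedDeriv (2 * k + 1) (fun s : ℝ => c * (1 - s ^ 2 / H) ^ k) s = 0 := by
  have hp : (fun s : ℝ => c * (1 - s ^ 2 / H) ^ k) =
      fun s => (C c * (1 - X ^ 2 * C H⁻¹) ^ k).eval s := by
    ext s; simp [div_eq_mul_inv, mul_comm H⁻¹]
  rw [hp, iteratedDeriv_polynomial, iterate_derivative_eq_zero]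
  · simp
  · refine Nat.lt_succ_of_le ?_
    compute_degree
    omega

lemma radonChi_flat {k : ℕ} (hk : n = 2 * k + 1) (ha : ∀ i, 0 < a i) {x₀ x₁ : En n}
    (h0 : ∑ i, (x₀ i / a i) ^ 2 < 1) (h1 : ∑ i, (x₁ i / a i) ^ 2 < 1) (h : x₀ ≠ x₁) :
    ContDiffAt ℝ (n : ℕ∞)
        (radonChi n {x : En n | ∑ i, (x i / a i) ^ 2 < 1} (omegaStar n x₀ x₁)) (sStar n x₀ x₁) ∧
      iteratedDeriv n (radonChi n {x : En n | ∑ i, (x i / a i) ^ 2 < 1} (omegaStar n x₀ x₁))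
        (sStar n x₀ x₁) = 0 := by
  have hH := supportSq_pos ha (omegaStar_ne_zero h)
  have hev : radonChi n {x : En n | ∑ i, (x i / a i) ^ 2 < 1} (omegaStar n x₀ x₁)
      =ᶠ[𝓝 (sStar n x₀ x₁)] fun s =>
        radonChi n {x : En n | ∑ i, (x i / a i) ^ 2 < 1} (omegaStar n x₀ x₁) 0 *
          (1 - s ^ 2 / supportSq a (omegaStar n x₀ x₁)) ^ k := by
    have hopen : ∀ᶠ s in 𝓝 (sStar n x₀ x₁), s ^ 2 < supportSq a (omegaStar n x₀ x₁) :=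
      (continuous_pow 2).continuousAt.eventually_lt continuousAt_const (sStar_sq_lt ha h0 h1 h)
    filter_upwards [hopen] with s hs using radonChi_ellipsoid hk ha hH hs
  constructor
  · refine ContDiffAt.congr_of_eventuallyEq ?_ hev
    fun_prop
  · rw [hev.iteratedDeriv_eq]
    have := iteratedDeriv_profile
      (radonChi n {x : En n | ∑ i, (x i / a i) ^ 2 < 1} (omegaStar n x₀ x₁) 0)
      (supportSq a (omegaStar n x₀ x₁)) (sStar n x₀ x₁) k
    rwa [← hk] at this

/-- Theorem (vanishing of the kernel `k_Ω` for elliptical domains, odd dimension). -/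
theorem kernel_vanishes_elliptical_odd
    (n : ℕ) (hn3 : 3 ≤ n) (hnodd : Odd n)
    (a : Fin n → ℝ) (ha : ∀ i, 0 < a i) :
    let Ω : Set (En n) := {x : En n | ∑ i, (x i / a i) ^ 2 < 1}
    (∀ x₀ ∈ Ω, ∀ x₁ ∈ Ω, x₀ ≠ x₁ →
      ContDiffAt ℝ (n : ℕ∞) (radonChi n Ω (omegaStar n x₀ x₁)) (sStar n x₀ x₁) ∧
      iteratedDeriv n (radonChi n Ω (omegaStar n x₀ x₁)) (sStar n x₀ x₁) = 0 ∧
      kernOdd n Ω x₀ x₁ = 0) ∧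
    ∀ f : En n → ℝ, tsupport f ⊆ Ω → ∀ x₀ ∈ Ω, Kop n Ω (kernOdd n Ω) f x₀ = 0 := by
  intro Ω
  obtain ⟨k, hk⟩ := hnodd
  have main : ∀ x₀ ∈ Ω, ∀ x₁ ∈ Ω, x₀ ≠ x₁ →
      ContDiffAt ℝ (n : ℕ∞) (radonChi n Ω (omegaStar n x₀ x₁)) (sStar n x₀ x₁) ∧
      iteratedDeriv n (radonChi n Ω (omegaStar n x₀ x₁)) (sStar n x₀ x₁) = 0 ∧
      kernOdd n Ω x₀ x₁ = 0 := by
    intro x₀ h0 x₁ h1 h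
    obtain ⟨hc, hd⟩ := radonChi_flat hk ha h0 h1 h
    exact ⟨hc, hd, by rw [kernOdd, hd]; simp⟩
  refine ⟨main, fun f _ x₀ h0 => setIntegral_eq_zero_of_forall_eq_zero fun x₁ h1 => ?_⟩
  rcases eq_or_ne x₀ x₁ with rfl | h
  · have hn : n - 1 ≠ 0 := by omega
    -- On the diagonal the kernel is a quotient by `0 ^ (n - 1) = 0`, hence `0` by convention.
    simp [kernOdd, hn]
  · rw [(main x₀ h0 x₁ h1 h).2.2, zero_mul]

end
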